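/- Let H be a real Hilbert space and let θ : H → H be the truncation function defined by θ(h) = h if ‖h‖ ≤ 1 and θ(h) = h/‖h‖ if ‖h‖ > 1. Then for all h₁, h₂ ∈ H one has ‖θ(h₁ + h₂) − θ(h₁) − θ(h₂)‖ ≤ 2·((min(‖h₁‖,1))² + (min(‖h₂‖,1))²). -/

import Mathlib

/-!
Write `θ h = (max ‖h‖ 1)⁻¹ • h`, and let `a = min ‖h₁‖ 1`, `b = min ‖h₂‖ 1`, which are the norms
of `θ h₁` and `θ h₂`.

* If both vectors have norm greater than `1`, the left side is at most `3 ≤ 4`.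
* If exactly one does, say `h₁`, then `θ` being Lipschitz with constant `2`
  (`norm_trunc_sub_le`) bounds the left side by
  `‖θ (h₁ + h₂) - θ h₁‖ + ‖θ h₂‖ ≤ 3 b ≤ 2 (1 + b²)`. The sharp constant `1`, valid in a Hilbert
  space, is not needed.
* If neither does, the left side is `‖θ (h₁ + h₂) - (h₁ + h₂)‖`, the distance from `h₁ + h₂` to the
  unit ball. It vanishes if `‖h₁ + h₂‖ ≤ 1`, and otherwise it is at most
  `a + b - 1 ≤ (a + b)² ≤ 2 (a² + b²)`.
-/

/-- Truncation to the unit ball is Lipschitz with constant `2` in any real normed space. -/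
lemma norm_trunc_sub_le {E : Type*} [NormedAddCommGroup E] [NormedSpace ℝ E] (x y : E) :
    ‖(max ‖x‖ 1)⁻¹ • x - (max ‖y‖ 1)⁻¹ • y‖ ≤ 2 * ‖x - y‖ := by
  have hm : 1 ≤ max ‖x‖ 1 := le_max_right _ _
  have hn : 1 ≤ max ‖y‖ 1 := le_max_right _ _
  have hxm : ‖x‖ ≤ max ‖x‖ 1 := le_max_left _ _
  have hmn : |max ‖y‖ 1 - max ‖x‖ 1| ≤ ‖x - y‖ := by
    refine (abs_max_sub_max_le_abs _ _ _).trans ?_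
    rw [norm_sub_rev]
    exact abs_norm_sub_norm_le y x
  generalize max ‖x‖ 1 = m at *
  generalize max ‖y‖ 1 = n at *
  have hm0 : 0 < m := by linarith
  have hn0 : 0 < n := by linarith
  have key : m⁻¹ • x - n⁻¹ • y = n⁻¹ • ((x - y) + ((n - m) * m⁻¹) • x) := by
    have hc : n⁻¹ * ((n - m) * m⁻¹) = m⁻¹ - n⁻¹ := by field_simp
    rw [smul_add, smul_smul, hc, smul_sub, sub_smul]
    abel
  have h1 : ‖((n - m) * m⁻¹) • x‖ ≤ ‖x - y‖ := by
    rw [norm_smul, Real.norm_eq_abs, abs_mul, abs_of_pos (inv_pos.2 hm0), mul_assoc]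
    have : m⁻¹ * ‖x‖ ≤ 1 := by
      rw [inv_mul_le_iff₀ hm0]; linarith
    exact (mul_le_of_le_one_right (abs_nonneg _) this).trans hmn
  rw [key, norm_smul, Real.norm_eq_abs, abs_of_pos (inv_pos.2 hn0)]
  calc n⁻¹ * ‖(x - y) + ((n - m) * m⁻¹) • x‖
      ≤ ‖(x - y) + ((n - m) * m⁻¹) • x‖ :=
        mul_le_of_le_one_left (norm_nonneg _) (inv_le_one_of_one_le₀ hn)
    _ ≤ 2 * ‖x - y‖ := by linarith [norm_add_le (x - y) (((n - m) * m⁻¹) • x)]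

/-- **Second-difference inequality for the truncation function.**  Let `H` be a real
Hilbert space and `θ : H → H` the truncation function given by `θ h = h` if `‖h‖ ≤ 1`
and `θ h = h / ‖h‖` if `‖h‖ > 1`.  Then for all `h₁ h₂ : H`,
`‖θ (h₁ + h₂) − θ h₁ − θ h₂‖ ≤ 2 ((min ‖h₁‖ 1)² + (min ‖h₂‖ 1)²)`. -/
theorem truncation_second_difference
    {H : Type*} [NormedAddCommGroup H] [InnerProductSpace ℝ H] [CompleteSpace H]
    (θ : H → H) (hθ : ∀ h : H, θ h = if ‖h‖ ≤ 1 then h else ‖h‖⁻¹ • h)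
    (h₁ h₂ : H) :
    ‖θ (h₁ + h₂) - θ h₁ - θ h₂‖ ≤ 2 * ((min ‖h₁‖ 1) ^ 2 + (min ‖h₂‖ 1) ^ 2) := by
  have hmax : ∀ h, θ h = (max ‖h‖ 1)⁻¹ • h := fun h => by
    rw [hθ]
    split_ifs with hh
    · simp [max_eq_right hh]
    · rw [max_eq_left (not_le.1 hh).le]
  have hlip : ∀ x y, ‖θ x - θ y‖ ≤ 2 * ‖x - y‖ := fun x y => by
    rw [hmax, hmax]; exact norm_trunc_sub_le x y
  have hle : ∀ h, ‖θ h‖ ≤ 1 := fun h => by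
    rw [hθ]
    split_ifs with hh
    · exact hh
    · rw [norm_smul, norm_inv, norm_norm, inv_mul_cancel₀ (by linarith)]
  -- The case of one large and one small vector, stated once for use in both orders.
  have hmixed : ∀ x y : H, ‖y‖ ≤ 1 → ‖θ (x + y) - θ x - θ y‖ ≤ 2 * (1 + ‖y‖ ^ 2) := by
    intro x y hy
    have e : θ y = y := by rw [hθ, if_pos hy]
    have h1 := hlip (x + y) x
    rw [add_sub_cancel_left] at h1
    have h2 := norm_sub_le (θ (x + y) - θ x) (θ y)
    rw [e] at h2 ⊢
    nlinarith [sq_nonneg (‖y‖ - 3 / 4)]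
  rcases le_or_gt ‖h₁‖ 1 with ha | ha <;> rcases le_or_gt ‖h₂‖ 1 with hb | hb
  · rw [min_eq_left ha, min_eq_left hb, hθ h₁, hθ h₂, if_pos ha, if_pos hb, hθ, sub_sub]
    split_ifs with hs
    · rw [sub_self, norm_zero]; positivity
    · have hs1 : 1 < ‖h₁ + h₂‖ := not_le.1 hs
      have e : ‖h₁ + h₂‖⁻¹ • (h₁ + h₂) - (h₁ + h₂) = (‖h₁ + h₂‖⁻¹ - 1) • (h₁ + h₂) := by
        rw [sub_smul, one_smul]
      have hi : ‖h₁ + h₂‖⁻¹ ≤ 1 := inv_le_one_of_one_le₀ hs1.le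
      rw [e, norm_smul, Real.norm_eq_abs, abs_of_nonpos (by linarith), neg_sub, sub_mul,
        inv_mul_cancel₀ (by linarith)]
      nlinarith [norm_add_le h₁ h₂, sq_nonneg (‖h₁‖ - ‖h₂‖), sq_nonneg (‖h₁‖ + ‖h₂‖ - 1)]
  · rw [min_eq_left ha, min_eq_right hb.le, add_comm h₁ h₂, sub_right_comm]
    linarith [hmixed h₂ h₁ ha]
  · rw [min_eq_right ha.le, min_eq_left hb]
    linarith [hmixed h₁ h₂ hb]
  · rw [min_eq_right ha.le, min_eq_right hb.le]
    linarith [norm_sub_le (θ (h₁ + h₂) - θ h₁) (θ h₂), norm_sub_le (θ (h₁ + h₂)) (θ h₁),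
      hle (h₁ + h₂), hle h₁, hle h₂]
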